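/- arXiv:1102.2460 — 2 statements merged into one kernel-verified Lean document; each statement's English description precedes it below -/
import Mathlib

section
/- Fix n ≥ 1, 0 ≤ j ≤ n−1, and a j-element subset J ⊆ {1,…,n}. If x ∈ ℝ⟨{1,…,n}, n−j⟩ is supported on injective words all of whose letters lie in {1,…,n}∖J, and δ({1,…,n}, n−j, n−j−1)(x) = 0, then x lies in the image of the map δ({1,…,n}, n, n−j) : ℝ⟨{1,…,n}, n⟩ → ℝ⟨{1,…,n}, n−j⟩. -/
/-!
Let `m = n - j`. For a word `w` of length `m` and an ordering `t_1, …, t_j` of the remaining letters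
let `w ⧢ t_1 ⧢ ⋯ ⧢ t_j` be the sum of all words obtained by inserting `t_1, …, t_j` successively
into `w`. The preimage of `x` is found among the combinations of such shuffles, with coefficients
`f(w, t)` given by a function on arrangements `(w, t)` of the whole alphabet.

Everything rests on one commutation rule (`insSum_subSum`). Write `δ_l v` for the sum of the
subwords of length `l` of a word `v`. For a letter `t`,
`δ_l (v ⧢ t) = (|v| + 1) δ_l v + (replace one letter of δ_l v by t) + (δ_{l-1} v) ⧢ t`.

If `f` is killed by deleting one letter of the head `w` (for fixed tail), then so are all `δ_l` with
`l < m` of its partial shuffles, by induction on the number of inserted letters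
(`sum_shufSum_eq_zero`). Hence the last term of the rule disappears for `l = m`, and iterating gives
(`sum_shufSum_eq`): `δ_m` of the shuffles of `f` is obtained from
`(m + j + Y_j) ⋯ (m + 1 + Y_1) f` by forgetting the tail, where `Y_k` is the sum of the `m`
exchanges of a head position with the tail position `k`.

Since `Y_k` is a sum of `m` permutation operators, `m + k + Y_k` is injective (`exchOp_eq_zero`),
hence bijective; and it commutes with permutations of the head positions, hence preserves the kernel
condition (`moveSum_exchOp`). So any function on arrangements satisfying the kernel condition has
the form `(m + j + Y_j) ⋯ (m + 1 + Y_1) f` with `f` satisfying it too (`exists_exchList_eq`).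
Finally `x` gives rise to such a function: because `x` lives on words with letter set `Jᶜ`,
the letter deleted from a word in its support is determined by the rest
(`sum_cycleRange_eq_zero`).

Linear combinations of words are handled dually, through the values of linear functionals: all
operators below act on functions `List A → ℝ`.
-/

/-- An injective word of length `i` over the alphabet `A`:
a sequence of `i` pairwise distinct letters of `A`. -/
abbrev InjWord (A : Type*) (i : ℕ) : Type _ := {w : Fin i → A // Function.Injective w}

/-- The length-`i` subword of an injective word `w` of length `j` indexed by a subset
`s ⊆ Fin j` of cardinality `i` (the letters are taken in order). -/
def subword {A : Type*} {j i : ℕ} (w : InjWord A j) (s : Finset (Fin j))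
    (hs : s.card = i) : InjWord A i :=
  ⟨fun t => w.1 ((s.orderIsoOfFin hs t : Fin j)),
    fun _ _ hab => (s.orderIsoOfFin hs).injective (Subtype.val_injective (w.2 hab))⟩

/-- The linear map `δ(A,j,i) : ℝ⟨A,i⟩ → ℝ⟨A,i⟩` on the free real vector space with basis
the injective words, sending a word of length `j` to the sum of all of its length-`i`
subwords (subsequences taken in order). -/
noncomputable def delta (A : Type*) [Fintype A] [DecidableEq A] (j i : ℕ) :
    (InjWord A j → ℝ) →ₗ[ℝ] (InjWord A i → ℝ) :=
  Matrix.mulVecLin (Matrix.of fun (u : InjWord A i) (w : InjWord A j) =>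
    (((Finset.powersetCard i (Finset.univ : Finset (Fin j))).attach.filter
      (fun s => subword w s.1 (Finset.mem_powersetCard.mp s.2).2 = u)).card : ℝ))

namespace AvoidKer

/-! ### Operators on functions of lists -/

section Lists

variable {A : Type*}

/-- `subSum φ v` is the sum of `φ` over all sublists of `v` (with multiplicity). -/
def subSum (φ : List A → ℝ) : List A → ℝ
  | [] => φ []
  | a :: v => subSum (fun u => φ (a :: u)) v + subSum φ v

/-- `insSum a φ v` is the sum of `φ` over all ways of inserting the letter `a` into `v`. -/
def insSum (a : A) (φ : List A → ℝ) : List A → ℝ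
  | [] => φ [a]
  | b :: v => φ (a :: b :: v) + insSum a (fun u => φ (b :: u)) v

/-- `replSum a φ v` is the sum of `φ` over all ways of replacing one letter of `v` by `a`. -/
def replSum (a : A) (φ : List A → ℝ) : List A → ℝ
  | [] => 0
  | b :: v => φ (a :: v) + replSum a (fun u => φ (b :: u)) v

/-- `eraseSum φ v` is the sum of `φ` over all ways of deleting one letter of `v`. -/
def eraseSum (φ : List A → ℝ) : List A → ℝ
  | [] => 0
  | b :: v => φ v + eraseSum (fun u => φ (b :: u)) v

theorem subSum_add (φ ψ : List A → ℝ) (v : List A) :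
    subSum (fun u => φ u + ψ u) v = subSum φ v + subSum ψ v := by
  induction v generalizing φ ψ with
  | nil => rfl
  | cons a v ih => simp only [subSum, ih]; ring

theorem subSum_mul (c : ℝ) (φ : List A → ℝ) (v : List A) :
    subSum (fun u => c * φ u) v = c * subSum φ v := by
  induction v generalizing φ with
  | nil => rfl
  | cons a v ih => simp only [subSum, ih]; ring

theorem insSum_add (a : A) (φ ψ : List A → ℝ) (v : List A) :
    insSum a (fun u => φ u + ψ u) v = insSum a φ v + insSum a ψ v := by
  induction v generalizing φ ψ with
  | nil => rfl
  | cons b v ih => simp only [insSum, ih]; ring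

theorem insSum_mul (a : A) (c : ℝ) (φ : List A → ℝ) (v : List A) :
    insSum a (fun u => c * φ u) v = c * insSum a φ v := by
  induction v generalizing φ with
  | nil => rfl
  | cons b v ih => simp only [insSum, ih]; ring

theorem eraseSum_add (φ ψ : List A → ℝ) (v : List A) :
    eraseSum (fun u => φ u + ψ u) v = eraseSum φ v + eraseSum ψ v := by
  induction v generalizing φ ψ with
  | nil => simp [eraseSum]
  | cons b v ih => simp only [eraseSum, ih]; ring

theorem insSum_congr (a : A) (φ ψ : List A → ℝ) (v : List A)
    (h : ∀ u, u.Perm (a :: v) → φ u = ψ u) : insSum a φ v = insSum a ψ v := by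
  induction v generalizing φ ψ with
  | nil => exact h _ (List.Perm.refl _)
  | cons b v ih =>
    simp only [insSum]
    rw [h _ (List.Perm.refl _), ih _ _ fun u hu => h _ ?_]
    exact (hu.cons b).trans (List.Perm.swap a b v)

theorem replSum_eq_zero (a : A) (φ : List A → ℝ) (v : List A)
    (h : ∀ u, u.length = v.length → φ u = 0) : replSum a φ v = 0 := by
  induction v generalizing φ with
  | nil => rfl
  | cons b v ih =>
    simp only [replSum]
    rw [h _ (by simp), ih _ fun u hu => h _ (by simp [hu]), add_zero]

theorem insSum_eq_zero (a : A) (φ : List A → ℝ) (v : List A)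
    (h : ∀ u, u.length = v.length + 1 → φ u = 0) : insSum a φ v = 0 := by
  rw [insSum_congr a φ (fun u => 0 * φ u) v, insSum_mul, zero_mul]
  intro u hu
  rw [h u (by simpa using hu.length_eq), mul_zero]

/-- The commutation rule between inserting a letter and passing to subwords. A subword of a word
`v` with `a` inserted either misses `a`, and then arises for each of the `|v| + 1` insertions; or
it is a shorter subword of `v` with `a` inserted, and the insertions of `a` into `v` that fall
into a given gap of that subword are one more than the letters of `v` in this gap, i.e. than the
ways of obtaining the result by replacing a letter of a subword of `v`. -/
theorem insSum_subSum (a : A) (φ : List A → ℝ) (v : List A) :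
    insSum a (subSum φ) v =
      ((v.length : ℝ) + 1) * subSum φ v + subSum (replSum a φ) v + subSum (insSum a φ) v := by
  induction v generalizing φ with
  | nil => simp [insSum, subSum, replSum]; ring
  | cons b v ih =>
    simp only [insSum, subSum, insSum_add, ih, replSum, subSum_add, List.length_cons,
      Nat.cast_add, Nat.cast_one]
    ring

/-- Deleting one letter and then passing to a subword `u` of `v` produces every subword
`|v| - |u|` times. -/
theorem eraseSum_subSum (φ : List A → ℝ) (v : List A) :
    eraseSum (subSum φ) v = subSum (fun u => ((v.length : ℝ) - u.length) * φ u) v := by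
  induction v generalizing φ with
  | nil => simp [eraseSum, subSum]
  | cons b v ih =>
    have h : (fun u : List A => (((b :: v).length : ℝ) - u.length) * φ u) =
        fun u => ((v.length : ℝ) - u.length) * φ u + φ u := by
      funext u; simp only [List.length_cons, Nat.cast_add, Nat.cast_one]; ring
    simp only [eraseSum, subSum, eraseSum_add, ih]
    rw [h, subSum_add]
    simp only [List.length_cons, Nat.cast_add, Nat.cast_one, add_sub_add_right_eq_sub]
    ring

theorem subSum_congr (φ ψ : List A → ℝ) (v : List A)
    (h : ∀ u, u.length ≤ v.length → φ u = ψ u) : subSum φ v = subSum ψ v := by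
  induction v generalizing φ ψ with
  | nil => exact h _ le_rfl
  | cons b v ih =>
    simp only [subSum]
    rw [ih φ ψ fun u hu => h _ (hu.trans (by simp)), ih _ _ fun u hu => h _ (by simpa using hu)]

theorem subSum_self (φ : List A → ℝ) (v : List A) (h : ∀ u, u.length ≠ v.length → φ u = 0) :
    subSum φ v = φ v := by
  induction v generalizing φ with
  | nil => rfl
  | cons b v ih =>
    simp only [subSum]
    rw [ih _ fun u hu => h _ (by simpa using hu), subSum_congr φ (fun u => 0 * φ u), subSum_mul]
    · ring
    · intro u hu
      rw [h u (by simp; omega), mul_zero]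

theorem eraseSum_ofFn {m : ℕ} (φ : List A → ℝ) (w : Fin (m + 1) → A) :
    eraseSum φ (List.ofFn w) =
      ∑ i : Fin (m + 1), φ (List.ofFn fun l : Fin m => w (i.succAbove l)) := by
  induction m generalizing φ with
  | zero => simp [eraseSum]
  | succ m ih =>
    rw [List.ofFn_succ, eraseSum, ih, Fin.sum_univ_succ (n := m + 1)]
    congr 1
    refine Finset.sum_congr rfl fun i _ => ?_
    rw [List.ofFn_succ]
    simp

theorem replSum_ofFn {m : ℕ} (a : A) (φ : List A → ℝ) (w : Fin m → A) :
    replSum a φ (List.ofFn w) = ∑ i, φ (List.ofFn (Function.update w i a)) := by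
  induction m generalizing φ with
  | zero => simp [replSum]
  | succ m ih =>
    rw [List.ofFn_succ, replSum, ih, Fin.sum_univ_succ]
    congr 1
    · rw [List.ofFn_succ]; simp
    · refine Finset.sum_congr rfl fun i _ => ?_
      rw [List.ofFn_succ]
      congr 3
      funext l
      simp only [Function.update_apply, Fin.succ_inj]

/-- For a duplicate-free word the subword sum of an indicator function detects sublists. -/
theorem subSum_single [DecidableEq A] (u v : List A) (hv : v.Nodup) :
    subSum (fun l => if l = u then 1 else 0) v = if u.Sublist v then 1 else 0 := by
  have key : ∀ (φ : List A → ℝ) (v : List A), subSum φ v = (v.sublists'.map φ).sum := by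
    intro φ v
    induction v generalizing φ with
    | nil => simp [subSum]
    | cons a v ih =>
      simp only [subSum, ih, List.sublists'_cons, List.map_append, List.map_map, List.sum_append]
      rw [add_comm]; rfl
  rw [key]
  have h1 : (v.sublists'.map fun l => if l = u then (1 : ℝ) else 0).sum = v.sublists'.count u := by
    generalize v.sublists' = L
    induction L with
    | nil => simp
    | cons a L ih => simp [List.count_cons, ih, add_comm]
  rw [h1]
  split_ifs with h
  · rw [List.count_eq_one_of_mem (List.nodup_sublists'.2 hv) (List.mem_sublists'.2 h)]; simp
  · rw [List.count_eq_zero_of_not_mem (by simpa using h)]; simp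

/-- `shufSum t ks φ w` is the sum of `φ` over all ways of inserting the letters `t k`, `k ∈ ks`,
one after the other into `w`; the head of `ks` is inserted last. -/
def shufSum {K : Type*} (t : K → A) : List K → (List A → ℝ) → List A → ℝ
  | [], φ => φ
  | k :: ks, φ => shufSum t ks (insSum (t k) φ)

variable {K : Type*} (t : K → A)

theorem shufSum_add (ks : List K) (φ ψ : List A → ℝ) (w : List A) :
    shufSum t ks (fun u => φ u + ψ u) w = shufSum t ks φ w + shufSum t ks ψ w := by
  induction ks generalizing φ ψ with
  | nil => rfl
  | cons k ks ih => simp only [shufSum, ← ih, ← insSum_add]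

theorem shufSum_mul (ks : List K) (c : ℝ) (φ : List A → ℝ) (w : List A) :
    shufSum t ks (fun u => c * φ u) w = c * shufSum t ks φ w := by
  induction ks generalizing φ with
  | nil => rfl
  | cons k ks ih => simp only [shufSum, ← ih, ← insSum_mul]

theorem shufSum_sum {ι : Type*} (s : Finset ι) (ks : List K) (φ : ι → List A → ℝ) (w : List A) :
    shufSum t ks (fun u => ∑ i ∈ s, φ i u) w = ∑ i ∈ s, shufSum t ks (φ i) w := by
  classical
  induction s using Finset.induction_on with
  | empty => simpa using shufSum_mul t ks 0 (fun _ => 0) w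
  | insert i s hi ih => simp only [Finset.sum_insert hi, shufSum_add, ih]

theorem shufSum_congr (ks : List K) (φ ψ : List A → ℝ) (w : List A)
    (h : ∀ u, u.Perm (ks.map t ++ w) → φ u = ψ u) : shufSum t ks φ w = shufSum t ks ψ w := by
  induction ks generalizing φ ψ with
  | nil => exact h _ (List.Perm.refl _)
  | cons k ks ih =>
    exact ih _ _ fun v hv => insSum_congr _ _ _ _ fun u hu => h u (hu.trans (hv.cons _))

/-- The commutation rule `insSum_subSum` inside a sum over shuffles; all words `v` occurring
there have length `w.length + ks.length`. -/
theorem shufSum_cons_subSum (k : K) (ks : List K) (φ : List A → ℝ) (w : List A) :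
    shufSum t (k :: ks) (subSum φ) w =
      shufSum t ks (subSum fun u =>
        ((w.length + ks.length + 1 : ℕ) : ℝ) * φ u + replSum (t k) φ u) w +
      shufSum t ks (subSum (insSum (t k) φ)) w := by
  rw [shufSum, ← shufSum_add]
  refine shufSum_congr _ _ _ _ _ fun u hu => ?_
  rw [insSum_subSum, subSum_add, subSum_mul, hu.length_eq]
  simp only [List.length_append, List.length_map]
  push_cast; ring

end Lists

/-! ### Operators on functions of split arrangements -/

section Arrangements

variable {A : Type*} {m r : ℕ}

/-- An arrangement of the alphabet `A` into a head of length `m` and a tail of length `r`. -/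
abbrev Arr (A : Type*) (m r : ℕ) : Type _ := (Fin m ⊕ Fin r) ≃ A

/-- The head of an arrangement. -/
def head (σ : Arr A m r) : Fin m → A := fun i => σ (Sum.inl i)

/-- The tail of an arrangement. -/
def tail (σ : Arr A m r) : Fin r → A := fun k => σ (Sum.inr k)

/-- Exchange the letters in position `i` of the head and position `k` of the tail. -/
def exch (i : Fin m) (k : Fin r) (σ : Arr A m r) : Arr A m r :=
  (Equiv.swap (Sum.inl i) (Sum.inr k)).trans σ

/-- Rearrange the head by a permutation of its positions. -/
def permHead (π : Equiv.Perm (Fin m)) (σ : Arr A m r) : Arr A m r :=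
  (Equiv.sumCongr π (Equiv.refl _)).trans σ

theorem head_permHead (π : Equiv.Perm (Fin m)) (σ : Arr A m r) :
    head (permHead π σ) = head σ ∘ π := rfl

theorem tail_permHead (π : Equiv.Perm (Fin m)) (σ : Arr A m r) :
    tail (permHead π σ) = tail σ := rfl

theorem head_exch (i : Fin m) (k : Fin r) (σ : Arr A m r) :
    head (exch i k σ) = Function.update (head σ) i (tail σ k) := by
  funext l
  by_cases h : l = i
  · subst h; simp [head, exch, tail]
  · simp [head, exch, tail, h, Equiv.swap_apply_of_ne_of_ne]

theorem tail_exch_of_ne (i : Fin m) {k l : Fin r} (h : l ≠ k) (σ : Arr A m r) :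
    tail (exch i k σ) l = tail σ l := by
  simp [exch, tail, h, Equiv.swap_apply_of_ne_of_ne]

theorem exch_exch (i : Fin m) (k : Fin r) (σ : Arr A m r) : exch i k (exch i k σ) = σ := by
  ext l; simp [exch]

theorem permHead_symm_permHead (π : Equiv.Perm (Fin m)) (σ : Arr A m r) :
    permHead π.symm (permHead π σ) = σ := by
  ext l; cases l <;> simp [permHead]

theorem permHead_permHead_symm (π : Equiv.Perm (Fin m)) (σ : Arr A m r) :
    permHead π (permHead π.symm σ) = σ := by
  ext l; cases l <;> simp [permHead]

theorem exch_permHead (π : Equiv.Perm (Fin m)) (i : Fin m) (k : Fin r) (σ : Arr A m r) :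
    exch i k (permHead π σ) = permHead π (exch (π i) k σ) := by
  ext l
  rcases l with l | l
  · by_cases h : l = i
    · subst h; simp [exch, permHead]
    · simp [exch, permHead, h, Equiv.swap_apply_of_ne_of_ne]
  · by_cases h : l = k
    · subst h; simp [exch, permHead]
    · simp [exch, permHead, h, Equiv.swap_apply_of_ne_of_ne]

/-- The operator `c + ∑ i, (i k)` on functions of arrangements: a multiple of the identity plus all
exchanges with the tail position `k`. -/
def exchOp (c : ℝ) (k : Fin r) : (Arr A m r → ℝ) →ₗ[ℝ] (Arr A m r → ℝ) where
  toFun f := fun σ => c * f σ + ∑ i, f (exch i k σ)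
  map_add' f g := by funext σ; simp [Finset.sum_add_distrib]; ring
  map_smul' a f := by funext σ; simp [← Finset.mul_sum]; ring

/-- The sum of `f` over the arrangements in which the first letter of the head has been moved
to an arbitrary position of the head. -/
def moveSum (f : Arr A (m + 1) r → ℝ) (σ : Arr A (m + 1) r) : ℝ :=
  ∑ i : Fin (m + 1), f (permHead i.cycleRange σ)

/-- An exchange operator whose scalar exceeds the number of its exchanges is injective: compare both
sides at a point where `|f|` is maximal. -/
theorem exchOp_eq_zero [Finite A] (c : ℝ) (hc : (m : ℝ) < c) (k : Fin r) (f : Arr A m r → ℝ)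
    (h : exchOp c k f = 0) : f = 0 := by
  have : Finite (Arr A m r) := inferInstance
  by_contra hf
  obtain ⟨τ, hτ⟩ := Function.ne_iff.1 hf
  have : Nonempty (Arr A m r) := ⟨τ⟩
  obtain ⟨σ, hσ⟩ := Finite.exists_max fun σ => |f σ|
  have hpos : 0 < |f σ| := (abs_pos.2 hτ).trans_le (hσ τ)
  have h1 : c * f σ = -∑ i, f (exch i k σ) := by
    have := congrFun h σ
    simp only [exchOp, LinearMap.coe_mk, AddHom.coe_mk, Pi.zero_apply] at this
    linarith
  have h2 : c * |f σ| ≤ m * |f σ| := by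
    have hc0 : 0 < c := (Nat.cast_nonneg m).trans_lt hc
    calc c * |f σ| = |∑ i, f (exch i k σ)| := by 
          rw [← abs_neg (∑ i, _), ← h1, abs_mul, abs_of_pos hc0]
      _ ≤ ∑ i, |f (exch i k σ)| := Finset.abs_sum_le_sum_abs _ _
      _ ≤ ∑ _i : Fin m, |f σ| := Finset.sum_le_sum fun i _ => hσ _
      _ = m * |f σ| := by simp
  nlinarith

theorem moveSum_exchOp (c : ℝ) (k : Fin r) (f : Arr A (m + 1) r → ℝ) :
    moveSum (exchOp c k f) = exchOp c k (moveSum f) := by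
  funext σ
  simp only [moveSum, exchOp, LinearMap.coe_mk, AddHom.coe_mk, Finset.sum_add_distrib,
    Finset.mul_sum]
  congr 1
  rw [Finset.sum_comm (s := (Finset.univ : Finset (Fin (m + 1))))]
  rw [Finset.sum_comm]
  conv_rhs => rw [Finset.sum_comm]
  refine Finset.sum_congr rfl fun i _ => ?_
  simp only [exch_permHead]
  exact Equiv.sum_comp (Fin.cycleRange i) fun j => f (permHead i.cycleRange (exch j k σ))

theorem exists_exchOp_eq [Finite A] (c : ℝ) (hc : ((m + 1 : ℕ) : ℝ) < c) (k : Fin r)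
    (g : Arr A (m + 1) r → ℝ) (hg : moveSum g = 0) : ∃ f, moveSum f = 0 ∧ exchOp c k f = g := by
  have hinj : Function.Injective (exchOp (A := A) (m := m + 1) c k) :=
    (injective_iff_map_eq_zero _).2 fun f hf => exchOp_eq_zero c hc k f hf
  obtain ⟨f, rfl⟩ := LinearMap.injective_iff_surjective.1 hinj g
  refine ⟨f, exchOp_eq_zero c hc k _ ?_, rfl⟩
  rw [← moveSum_exchOp, hg]

/-- The composite of the operators `exchOp (m + 1 + l) k_l`, where `k_1, …, k_s` is the reverse
of the given list and `k_1` acts first. -/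
def exchList : List (Fin r) → (Arr A (m + 1) r → ℝ) → (Arr A (m + 1) r → ℝ)
  | [], f => f
  | k :: ks, f => exchOp ((m + 1 + ks.length + 1 : ℕ) : ℝ) k (exchList ks f)

theorem exists_exchList_eq [Finite A] (ks : List (Fin r)) (g : Arr A (m + 1) r → ℝ)
    (hg : moveSum g = 0) : ∃ f, moveSum f = 0 ∧ exchList ks f = g := by
  induction ks generalizing g with
  | nil => exact ⟨g, hg, rfl⟩
  | cons k ks ih =>
    obtain ⟨f₁, h₁, h₂⟩ := exists_exchOp_eq ((m + 1 + ks.length + 1 : ℕ) : ℝ)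
      (by exact_mod_cast Nat.lt_succ_of_le (Nat.le_add_right _ _)) k g hg
    obtain ⟨f, h₃, h₄⟩ := ih f₁ h₁
    exact ⟨f, h₃, by rw [exchList, h₄, h₂]⟩

variable [Fintype A] [DecidableEq A]

theorem sum_permHead (π : Equiv.Perm (Fin m)) (F : Arr A m r → ℝ) :
    ∑ σ, F (permHead π σ) = ∑ σ, F σ :=
  Equiv.sum_comp (⟨permHead π, permHead π.symm, permHead_symm_permHead π,
    permHead_permHead_symm π⟩ : Arr A m r ≃ Arr A m r) F

theorem sum_exch (i : Fin m) (k : Fin r) (F : Arr A m r → ℝ) :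
    ∑ σ, F (exch i k σ) = ∑ σ, F σ :=
  Equiv.sum_comp (⟨exch i k, exch i k, exch_exch i k, exch_exch i k⟩ : Arr A m r ≃ Arr A m r) F

/-- If `moveSum f = 0`, then in the shuffles of `f` all subwords shorter than the heads cancel. The test
function `φ` may depend on the tail. -/
theorem sum_shufSum_eq_zero (f : Arr A (m + 1) r → ℝ) (hf : moveSum f = 0) (ks : List (Fin r))
    (φ : Arr A (m + 1) r → List A → ℝ) (hφ : ∀ π σ, φ (permHead π σ) = φ σ)
    (hlen : ∀ σ u, m + 1 ≤ u.length → φ σ u = 0) :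
    ∑ σ, f σ * shufSum (tail σ) ks (subSum (φ σ)) (List.ofFn (head σ)) = 0 := by
  induction ks generalizing φ with
  | nil =>
    -- Rescaling `φ` by the multiplicities turns the subword sum into a sum over deletions.
    let χ : Arr A (m + 1) r → List A → ℝ := fun σ u => (((m + 1 : ℕ) : ℝ) - u.length)⁻¹ * φ σ u
    have hχ : ∀ π σ, χ (permHead π σ) = χ σ := fun π σ => by simp only [χ, hφ]
    have h1 : ∀ σ, subSum (φ σ) (List.ofFn (head σ)) =
        ∑ i : Fin (m + 1), subSum (χ σ) (List.ofFn fun l : Fin m => head σ (i.succAbove l)) := by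
      intro σ
      rw [← eraseSum_ofFn, eraseSum_subSum]
      congr 1
      funext u
      by_cases hu : m + 1 ≤ u.length
      · simp only [χ, hlen σ u hu, mul_zero]
      · have : ((m + 1 : ℕ) : ℝ) - u.length ≠ 0 := by
          rw [sub_ne_zero, Ne, Nat.cast_inj]; omega
        simp only [χ, List.length_ofFn]
        rw [← mul_assoc, mul_inv_cancel₀ this, one_mul]
    simp only [shufSum, h1, Finset.mul_sum]
    rw [Finset.sum_comm]
    have h2 : ∀ i : Fin (m + 1),
        ∑ σ, f σ * subSum (χ σ) (List.ofFn fun l : Fin m => head σ (i.succAbove l)) =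
        ∑ σ, f (permHead i.cycleRange σ) *
          subSum (χ σ) (List.ofFn fun l : Fin m => head σ l.succ) := by
      intro i
      rw [← sum_permHead i.cycleRange]
      refine Finset.sum_congr rfl fun σ _ => ?_
      simp only [hχ, head_permHead, Function.comp, Fin.cycleRange_succAbove]
    simp only [h2]
    rw [Finset.sum_comm]
    refine Finset.sum_eq_zero fun σ _ => ?_
    rw [← Finset.sum_mul]
    have := congrFun hf σ
    simp only [moveSum, Pi.zero_apply] at this
    rw [this, zero_mul]
  | cons k ks ih =>
    simp only [shufSum_cons_subSum, mul_add, Finset.sum_add_distrib, List.length_ofFn]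
    rw [ih, ih, add_zero]
    · intro π σ; simp only [hφ, tail_permHead]
    · intro σ u hu
      exact insSum_eq_zero _ _ _ fun v hv => hlen σ v (by omega)
    · intro π σ; simp only [hφ, tail_permHead]
    · intro σ u hu
      rw [hlen σ u hu, replSum_eq_zero _ _ _ fun v hv => hlen σ v (by omega)]; simp

/-- If `moveSum f = 0`, then the subwords of head length in the shuffles of `f` are the heads of
`exchList ks f`. The test function `φ` may depend on the tail positions outside `ks`. -/
theorem sum_shufSum_eq (f : Arr A (m + 1) r → ℝ) (hf : moveSum f = 0) (ks : List (Fin r))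
    (hks : ks.Nodup) (φ : Arr A (m + 1) r → List A → ℝ) (hφ : ∀ π σ, φ (permHead π σ) = φ σ)
    (hφ' : ∀ k ∈ ks, ∀ i σ, φ (exch i k σ) = φ σ)
    (hlen : ∀ σ u, u.length ≠ m + 1 → φ σ u = 0) :
    ∑ σ, f σ * shufSum (tail σ) ks (subSum (φ σ)) (List.ofFn (head σ)) =
      ∑ σ, exchList ks f σ * φ σ (List.ofFn (head σ)) := by
  induction ks generalizing φ with
  | nil =>
    refine Finset.sum_congr rfl fun σ _ => ?_
    rw [shufSum, subSum_self _ _ fun u hu => hlen σ u (by simpa using hu)]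
    rfl
  | cons k ks ih =>
    obtain ⟨hk, hks⟩ := List.nodup_cons.1 hks
    simp only [shufSum_cons_subSum, mul_add, Finset.sum_add_distrib, List.length_ofFn]
    rw [sum_shufSum_eq_zero f hf ks (fun σ => insSum (tail σ k) (φ σ)), add_zero, ih hks]
    · simp only [mul_add, Finset.sum_add_distrib, replSum_ofFn, exchList, exchOp,
        LinearMap.coe_mk, AddHom.coe_mk, add_mul, Finset.mul_sum, Finset.sum_mul]
      congr 1
      · exact Finset.sum_congr rfl fun σ _ => by ring
      · rw [Finset.sum_comm]
        conv_rhs => rw [Finset.sum_comm]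
        refine Finset.sum_congr rfl fun i _ => ?_
        rw [← sum_exch i k]
        refine Finset.sum_congr rfl fun σ _ => ?_
        rw [← head_exch, exch_exch, hφ' k (by simp)]
    · intro π σ; simp only [hφ, tail_permHead]
    · intro l hl i σ
      have : k ≠ l := fun h => hk (h ▸ hl)
      simp only [hφ' l (List.mem_cons_of_mem _ hl), tail_exch_of_ne i this]
    · intro σ u hu
      rw [hlen σ u hu, replSum_eq_zero _ _ _ fun v hv => hlen σ v (by omega)]; simp
    · intro π σ; simp only [hφ, tail_permHead]
    · intro σ u hu
      exact insSum_eq_zero _ _ _ fun v hv => hlen σ v (by omega)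

end Arrangements

/-! ### Injective words -/

section Words

variable {A : Type*}

theorem ofFn_sublist_ofFn {i j : ℕ} (u : Fin i → A) (v : Fin j → A) :
    (List.ofFn u).Sublist (List.ofFn v) ↔ ∃ f : Fin i ↪o Fin j, ∀ l, u l = v (f l) := by
  rw [List.sublist_iff_exists_fin_orderEmbedding_get_eq]
  constructor
  · rintro ⟨f, hf⟩
    refine ⟨((Fin.castOrderIso (List.length_ofFn (f := u)).symm).toOrderEmbedding.trans f).trans
      (Fin.castOrderIso (List.length_ofFn (f := v))).toOrderEmbedding, fun l => ?_⟩
    have := hf (Fin.cast (List.length_ofFn (f := u)).symm l)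
    simp only [List.get_ofFn] at this
    exact this
  · rintro ⟨f, hf⟩
    refine ⟨((Fin.castOrderIso (List.length_ofFn (f := u))).toOrderEmbedding.trans f).trans
      (Fin.castOrderIso (List.length_ofFn (f := v)).symm).toOrderEmbedding, fun l => ?_⟩
    simp only [List.get_ofFn, hf]
    rfl

variable [Fintype A] [DecidableEq A]

/-- As words are injective, each subword occurs only once, so the coefficients of `delta` are
indicators of the sublist relation. -/
theorem delta_apply (j i : ℕ) (y : InjWord A j → ℝ) (u : InjWord A i) :
    delta A j i y u =
      ∑ v : InjWord A j, (if (List.ofFn u.1).Sublist (List.ofFn v.1) then 1 else 0) * y v := by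
  simp only [delta, Matrix.mulVecLin_apply, Matrix.mulVec, dotProduct, Matrix.of_apply]
  refine Finset.sum_congr rfl fun v _ => ?_
  congr 1
  split_ifs with h
  · rw [ofFn_sublist_ofFn] at h
    obtain ⟨f, hf⟩ := h
    have hc : (Finset.univ.map f.toEmbedding).card = i := by simp
    rw [Nat.cast_eq_one, Finset.card_eq_one]
    refine ⟨⟨Finset.univ.map f.toEmbedding,
      Finset.mem_powersetCard.2 ⟨Finset.subset_univ _, hc⟩⟩, ?_⟩
    ext ⟨s, hs⟩
    have hsc := (Finset.mem_powersetCard.1 hs).2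
    simp only [Finset.mem_filter, Finset.mem_attach, true_and, Finset.mem_singleton,
      Subtype.mk.injEq]
    constructor
    · intro he
      have h1 : ∀ l, s.orderEmbOfFin hsc l = f l := fun l => by
        have := congrFun (congrArg Subtype.val he) l
        rw [hf l] at this
        exact v.2 this
      rw [← Finset.map_orderEmbOfFin_univ s hsc]
      congr 1
      ext l
      exact congrArg Fin.val (h1 l)
    · rintro rfl
      have h1 := Finset.orderEmbOfFin_unique' hsc (f := f) (fun l => by simp)
      apply Subtype.ext
      funext l
      rw [hf l]
      exact congrArg v.1 (DFunLike.congr_fun h1 l).symm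
  · rw [Nat.cast_eq_zero, Finset.card_eq_zero, Finset.filter_eq_empty_iff]
    rintro ⟨s, hs⟩ - he
    refine h ((ofFn_sublist_ofFn _ _).2
      ⟨s.orderEmbOfFin (Finset.mem_powersetCard.1 hs).2, fun l => ?_⟩)
    rw [← he]
    rfl

/-- For `x` supported on arrangements of `Jᶜ`, the vanishing of `delta x` says that the sum of `x`
over all ways of moving the first letter of a word is zero. -/
theorem sum_cycleRange_eq_zero {m : ℕ} (J : Finset A) (hJ : J.card + (m + 1) = Fintype.card A)
    (x : InjWord A (m + 1) → ℝ) (hsupp : ∀ w : InjWord A (m + 1), (∃ t, w.1 t ∈ J) → x w = 0)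
    (hker : delta A (m + 1) m x = 0) (w : InjWord A (m + 1)) :
    ∑ i : Fin (m + 1), x ⟨w.1 ∘ i.cycleRange, w.2.comp i.cycleRange.injective⟩ = 0 := by
  by_cases hw : ∃ t, w.1 t ∈ J
  · obtain ⟨t, ht⟩ := hw
    refine Finset.sum_eq_zero fun i _ => hsupp _ ⟨i.cycleRange.symm t, ?_⟩
    simpa using ht
  have h0 := congrFun hker ⟨fun l : Fin m => w.1 l.succ, w.2.comp (Fin.succ_injective m)⟩
  rw [delta_apply, Pi.zero_apply] at h0
  rw [← h0]
  let g : Fin (m + 1) → InjWord A (m + 1) :=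
    fun i => ⟨w.1 ∘ i.cycleRange, w.2.comp i.cycleRange.injective⟩
  have hg : Function.Injective g := by
    intro i k h
    have h1 := congrFun (congrArg Subtype.val h) i
    have h2 := w.2 h1
    rw [Fin.cycleRange_self] at h2
    apply k.cycleRange.injective
    rw [Fin.cycleRange_self, ← h2]
  have h1 : ∑ i, x (g i) = ∑ v ∈ Finset.univ.image g,
      (if (List.ofFn fun l : Fin m => w.1 l.succ).Sublist (List.ofFn v.1) then 1 else 0) * x v := by
    rw [Finset.sum_image fun _ _ _ _ h => hg h]
    refine Finset.sum_congr rfl fun i _ => ?_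
    rw [if_pos, one_mul]
    refine (ofFn_sublist_ofFn _ _).2 ⟨Fin.succAboveOrderEmb i, fun l => ?_⟩
    simp [g]
  refine h1.trans (Finset.sum_subset (Finset.subset_univ _) fun v _ hv => ?_)
  by_cases hvJ : ∃ t, v.1 t ∈ J
  · rw [hsupp v hvJ, mul_zero]
  rw [if_neg, zero_mul]
  intro hsub
  apply hv
  rw [Finset.mem_image]
  obtain ⟨f, hf⟩ := (ofFn_sublist_ofFn _ _).1 hsub
  -- A sublist of length one less arises by omitting a single position `i`.
  obtain ⟨i, hi⟩ : ∃ i, i ∉ Set.range f := by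
    by_contra! h
    have := Fintype.card_le_of_surjective f h
    simp at this
  have hfi : ∀ l, f l = i.succAbove l := by
    have hc : ({i}ᶜ : Finset (Fin (m + 1))).card = m := by simp [Finset.card_compl]
    have e1 := Finset.orderEmbOfFin_unique' hc (f := f) fun l => by
      simpa using fun h => hi ⟨l, h⟩
    have e2 := Finset.orderEmbOfFin_unique' hc (f := Fin.succAboveOrderEmb i) fun l => by simp
    intro l
    rw [e1, ← e2]
    rfl
  -- The head letter of `w` is the only letter of `Jᶜ` left for position `i` of `v`.
  have himg : Finset.univ.image v.1 = Jᶜ := by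
    apply Finset.eq_of_subset_of_card_le
    · intro a ha
      obtain ⟨t, -, rfl⟩ := Finset.mem_image.1 ha
      exact Finset.mem_compl.2 fun h => hvJ ⟨t, h⟩
    · rw [Finset.card_image_of_injective _ v.2, Finset.card_compl]
      simp
      omega
  have hvi : v.1 i = w.1 0 := by
    have : w.1 0 ∈ Finset.univ.image v.1 := by
      rw [himg, Finset.mem_compl]; exact fun h => hw ⟨0, h⟩
    obtain ⟨t, -, ht⟩ := Finset.mem_image.1 this
    by_cases hti : t = i
    · rw [← ht, hti]
    · obtain ⟨l, rfl⟩ := Fin.exists_succAbove_eq hti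
      rw [← hfi, ← hf] at ht
      exact absurd (w.2 ht) (Fin.succ_ne_zero l)
  refine ⟨i, Finset.mem_univ _, Subtype.ext (funext fun t => ?_)⟩
  by_cases hti : t = i
  · subst hti; simp [g, hvi]
  · obtain ⟨l, rfl⟩ := Fin.exists_succAbove_eq hti
    rw [← hfi, ← hf, hfi]
    simp [g]

end Words

/-! ### Lifting to words of full length -/

section Main

variable {A : Type*} [Fintype A] [DecidableEq A]

/-- The number of arrangements with head `w`. -/
def extCount {m : ℕ} (r : ℕ) (w : Fin m → A) : ℕ :=
  (Finset.univ.filter fun σ : Arr A m r => head σ = w).card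

theorem extCount_comp {m : ℕ} (r : ℕ) (w : Fin m → A) (π : Equiv.Perm (Fin m)) :
    extCount r (w ∘ π) = extCount r w := by
  unfold extCount
  refine Finset.card_nbij' (permHead π.symm) (permHead π) ?_ ?_
    (fun σ _ => permHead_permHead_symm π σ) (fun σ _ => permHead_symm_permHead π σ)
  · intro σ hσ
    simp only [Finset.coe_filter, Finset.mem_univ, true_and, Set.mem_ofPred_eq] at hσ ⊢
    rw [head_permHead, hσ, Function.comp_assoc]
    simp
  · intro σ hσ
    simp only [Finset.coe_filter, Finset.mem_univ, true_and, Set.mem_ofPred_eq] at hσ ⊢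
    rw [head_permHead, hσ]

theorem extCount_pos {m r : ℕ} (hA : Fintype.card A = m + r) (w : InjWord A m) :
    0 < extCount r w.1 := by
  have h1 : Fintype.card (Fin m ⊕ Fin r) = (Finset.univ : Finset A).card := by
    simp [hA, Finset.card_univ]
  obtain ⟨g, hg⟩ := Finset.exists_equiv_extend_of_card_eq h1
    (s := Finset.univ.image (Sum.inl : Fin m → Fin m ⊕ Fin r))
    (f := Sum.elim w.1 fun _ => Classical.choice (by
      by_contra h
      exact h ⟨(Fintype.equivFinOfCardEq hA).symm ⟨0, by
        have := ‹Fin r›.2; omega⟩⟩)) (by simp) (by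
      intro a ha b hb hab
      simp only [Finset.coe_image, Finset.coe_univ, Set.image_univ, Set.mem_range] at ha hb
      obtain ⟨a, rfl⟩ := ha
      obtain ⟨b, rfl⟩ := hb
      exact congrArg _ (w.2 hab))
  refine Finset.card_pos.2 ⟨g.trans (Equiv.subtypeUnivEquiv Finset.mem_univ), ?_⟩
  simp only [Finset.mem_filter, Finset.mem_univ, true_and]
  funext l
  exact hg (Sum.inl l) (by simp)

theorem mem_range_delta {m r : ℕ} (hA : Fintype.card A = m + 1 + r)
    (J : Finset A) (hJ : J.card = r) (x : InjWord A (m + 1) → ℝ)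
    (hsupp : ∀ w : InjWord A (m + 1), (∃ t, w.1 t ∈ J) → x w = 0)
    (hker : delta A (m + 1) m x = 0) :
    x ∈ LinearMap.range (delta A (m + 1 + r) (m + 1)) := by
  have hinj : ∀ σ : Arr A (m + 1) r, Function.Injective (head σ) :=
    fun σ => σ.injective.comp Sum.inl_injective
  -- `x` as a function of arrangements, normalised so that forgetting the tail gives `x` back.
  let g : Arr A (m + 1) r → ℝ := fun σ => (extCount r (head σ) : ℝ)⁻¹ * x ⟨head σ, hinj σ⟩
  have hg : moveSum g = 0 := by
    funext σ
    simp only [moveSum, g, head_permHead, extCount_comp, ← Finset.mul_sum]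
    rw [sum_cycleRange_eq_zero J (by omega) x hsupp hker ⟨head σ, hinj σ⟩, mul_zero, Pi.zero_apply]
  obtain ⟨f, hf, hfg⟩ := exists_exchList_eq (List.finRange r) g hg
  -- `y` is the sum of all shuffles of heads with their tails, weighted by `f`.
  let y : InjWord A (m + 1 + r) → ℝ := fun v =>
    ∑ σ, f σ * shufSum (tail σ) (List.finRange r)
      (fun l => if l = List.ofFn v.1 then 1 else 0) (List.ofFn (head σ))
  have hy : ∀ Φ : List A → ℝ, ∑ v, Φ (List.ofFn v.1) * y v =
      ∑ σ, f σ * shufSum (tail σ) (List.finRange r) Φ (List.ofFn (head σ)) := by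
    intro Φ
    simp only [y, Finset.mul_sum]
    rw [Finset.sum_comm]
    refine Finset.sum_congr rfl fun σ _ => ?_
    simp only [mul_left_comm _ (f σ)]
    rw [← Finset.mul_sum]
    simp only [← shufSum_mul (tail σ) (List.finRange r) (Φ _)]
    rw [← shufSum_sum]
    congr 1
    refine shufSum_congr _ _ _ _ _ fun u hu => ?_
    have hlen : u.length = m + 1 + r := by
      rw [hu.length_eq]; simp [add_comm]
    have hnd : u.Nodup := by
      rw [hu.nodup_iff, List.nodup_append]
      refine ⟨(List.nodup_finRange r).map (σ.injective.comp Sum.inr_injective),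
        List.nodup_ofFn.2 (hinj σ), ?_⟩
      intro a ha b hb hab
      obtain ⟨k, -, rfl⟩ := List.mem_map.1 ha
      obtain ⟨i, rfl⟩ := (List.mem_ofFn' _ _).1 hb
      have := σ.injective hab
      simp at this
    obtain ⟨v, hv⟩ : ∃ v : InjWord A (m + 1 + r), u = List.ofFn v.1 := by
      have hu' : u = List.ofFn fun l : Fin (m + 1 + r) => u.get (Fin.cast hlen.symm l) := by
        apply List.ext_get <;> simp [hlen]
      exact ⟨⟨_, List.nodup_ofFn.1 (hu' ▸ hnd)⟩, hu'⟩
    rw [Finset.sum_eq_single v]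
    · simp [hv]
    · intro v' _ hv'
      rw [if_neg, mul_zero]
      intro h
      exact hv' (Subtype.ext (List.ofFn_injective (h.symm.trans hv)))
    · simp
  refine ⟨y, funext fun u => ?_⟩
  rw [delta_apply]
  have h1 := hy (subSum fun l => if l = List.ofFn u.1 then 1 else 0)
  rw [sum_shufSum_eq f hf _ (List.nodup_finRange r)
    (fun _ l => if l = List.ofFn u.1 then 1 else 0) (fun _ _ => rfl) (fun _ _ _ _ => rfl), hfg] at h1
  · have h2 : ∀ v : InjWord A (m + 1 + r),
        subSum (fun l => if l = List.ofFn u.1 then 1 else 0) (List.ofFn v.1) =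
          if (List.ofFn u.1).Sublist (List.ofFn v.1) then 1 else 0 :=
      fun v => subSum_single _ _ (List.nodup_ofFn.2 v.2)
    simp only [h2] at h1
    rw [h1]
    have h3 : ∀ σ : Arr A (m + 1) r,
        g σ * (if List.ofFn (head σ) = List.ofFn u.1 then (1 : ℝ) else 0) =
        if head σ = u.1 then (extCount r u.1 : ℝ)⁻¹ * x u else 0 := by
      intro σ
      by_cases h : head σ = u.1
      · have : (⟨head σ, hinj σ⟩ : InjWord A (m + 1)) = u := Subtype.ext h
        simp only [g, this]
        simp [h]
      · rw [if_neg h, if_neg fun h' => h (List.ofFn_injective h'), mul_zero]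
    simp only [h3]
    rw [← Finset.sum_filter, Finset.sum_const, nsmul_eq_mul, ← mul_assoc]
    have h4 : ((extCount r u.1 : ℕ) : ℝ) ≠ 0 :=
      Nat.cast_ne_zero.2 (extCount_pos hA u).ne'
    change (extCount r u.1 : ℝ) * _ * _ = _
    rw [mul_inv_cancel₀ h4, one_mul]
  · intro _ l hl
    rw [if_neg]
    rintro rfl
    simp at hl

end Main

end AvoidKer

/-- If `x ∈ ℝ⟨{1,…,n}, n−j⟩` is supported on injective words all of whose letters avoid a
`j`-element subset `J`, and `δ({1,…,n}, n−j, n−j−1) x = 0`, then `x` lies in the image of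
`δ({1,…,n}, n, n−j) : ℝ⟨{1,…,n}, n⟩ → ℝ⟨{1,…,n}, n−j⟩`. -/
theorem avoid_ker_subset_range (n j : ℕ) (hn : 1 ≤ n) (hj : j ≤ n - 1)
    (J : Finset (Fin n)) (hJ : J.card = j)
    (x : InjWord (Fin n) (n - j) → ℝ)
    (hsupp : ∀ w : InjWord (Fin n) (n - j), (∃ t, w.1 t ∈ J) → x w = 0)
    (hker : delta (Fin n) (n - j) (n - j - 1) x = 0) :
    x ∈ LinearMap.range (delta (Fin n) n (n - j)) := by
  obtain ⟨m, hm⟩ : ∃ m, n - j = m + 1 := ⟨n - j - 1, by omega⟩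
  generalize hk : n - j = k at *
  subst hm
  have h1 := AvoidKer.mem_range_delta (A := Fin n) (m := m) (r := j) (by simp; omega) J hJ x
    hsupp hker
  have h2 : m + 1 + j = n := by omega
  rw [h2] at h1
  exact h1
end

section
/- Fix n ≥ 2 and let Φ = { (i,j) : i, j ∈ {1,…,n}, i ≠ j }, a set of size n(n−1). Define the Φ×Φ rational matrix μ by μ((i,j),(k,l)) = #{ w ∈ S_n : w⁻¹(i) < w⁻¹(j) and w⁻¹(k) < w⁻¹(l) }. Then the characteristic polynomial of μ equals X^{n(n−1)/2 − 1} · (X − C(n,2)·n!/2) · (X − (n+1)!/6)^{n−1} · (X − n!/6)^{(n−1)(n−2)/2}, where C(n,2) = n(n−1)/2. -/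
/-!
Write the indicator of `a < b` (for `a ≠ b`) as `(1 + sg a b) / 2` with `sg` the sign of `b - a`.
Summing over all permutations, the linear terms vanish by symmetry, so
`μ (p, q) = (n! + corr p q) / 4`, where `corr` is the sum over `w` of the product of the two signs.
Symmetry under permutations evaluates `corr`: it is `n!` for equal roots, `n! / 3` for roots
sharing their first index, `0` for disjoint ones, and antisymmetry gives the rest. In matrix form
(`matrix_eq`), with `J` the all-ones matrix,

  `μ = (n!/4) J + (n!/12) (B Bᵀ + C Cᵀ)`,

where row `(i, j)` of `B` is the root `e_i - e_j` and `C Cᵀ = 1 - P`, `P` being the swap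
`(i, j) ↦ (j, i)`. Since `J B = 0`, `J C = 0` and `C Cᵀ B = 2 B`, for `a = n!/4`, `b = n!/12`,

  `x (x - μ) = (x - a J) (x - b C Cᵀ) (1 - b/(x - 2b) B Bᵀ)`.

The Weinstein–Aronszajn identity `det (1 - U V) = det (1 - V U)` reduces the three determinants to
those of scalar matrices and rank-one perturbations of them, because `Cᵀ C = 2` and
`Bᵀ B = 2n - 2J`. This gives the characteristic polynomial at all but finitely many rational `x`
(`det_key`), hence as a polynomial.
-/

namespace RootMu
open Matrix

/-- The roots `e_i - e_j` of type `A_{n-1}`, as pairs `(i, j)` with `i ≠ j`. -/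
abbrev Root (n : ℕ) := {p : Fin n × Fin n // p.1 ≠ p.2}
/-- The positive roots, as pairs `(i, j)` with `i < j`. -/
abbrev PosRoot (n : ℕ) := {p : Fin n × Fin n // p.1 < p.2}

/-- The sign of `b - a`, with value in `{-1, 0, 1}`. -/
def sg {n : ℕ} (a b : Fin n) : ℚ := if a < b then 1 else if b < a then -1 else 0

lemma sg_antisymm {n : ℕ} (a b : Fin n) : sg b a = -sg a b := by
  unfold sg
  rcases lt_trichotomy a b with h | h | h
  · simp [h, h.not_gt]
  · simp [h]
  · simp [h, h.not_gt]

lemma sg_mul_self {n : ℕ} {a b : Fin n} (h : a ≠ b) : sg a b * sg a b = 1 := by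
  unfold sg
  rcases lt_or_gt_of_ne h with h | h
  · simp [h]
  · simp [h, h.not_gt]

/-- Of three distinct numbers, the least and the greatest contribute `1` each and the middle one
contributes `-1`. -/
lemma sg_triple {n : ℕ} {a b c : Fin n} (hab : a ≠ b) (hac : a ≠ c) (hbc : b ≠ c) :
    sg a b * sg a c + sg b a * sg b c + sg c a * sg c b = 1 := by
  unfold sg
  grind

/-- The unnormalized correlation, over a uniformly random permutation `w`, of the orders of
`w i, w j` and of `w k, w l`. -/
def corr {n : ℕ} (i j k l : Fin n) : ℚ :=
  ∑ w : Equiv.Perm (Fin n), sg (w i) (w j) * sg (w k) (w l)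

/-- Invariance of `corr` under relabelling, by right translation of the summation variable. -/
lemma corr_comp {n : ℕ} (u : Equiv.Perm (Fin n)) (i j k l : Fin n) :
    corr (u i) (u j) (u k) (u l) = corr i j k l := by
  unfold corr
  exact Equiv.sum_comp (Equiv.mulRight u)
    (fun w : Equiv.Perm (Fin n) => sg (w i) (w j) * sg (w k) (w l))

lemma corr_neg_left {n : ℕ} (i j k l : Fin n) : corr j i k l = -corr i j k l := by
  unfold corr
  rw [← Finset.sum_neg_distrib]
  exact Finset.sum_congr rfl fun w _ => by rw [sg_antisymm]; ring

lemma corr_neg_right {n : ℕ} (i j k l : Fin n) : corr i j l k = -corr i j k l := by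
  unfold corr
  rw [← Finset.sum_neg_distrib]
  exact Finset.sum_congr rfl fun w _ => by rw [sg_antisymm (w k)]; ring

lemma sum_sg {n : ℕ} (i j : Fin n) :
    ∑ w : Equiv.Perm (Fin n), sg (w i) (w j) = 0 := by
  have h := Equiv.sum_comp (Equiv.mulRight (Equiv.swap i j))
    (fun w : Equiv.Perm (Fin n) => sg (w i) (w j))
  simp only [Equiv.coe_mulRight, Equiv.Perm.mul_apply, Equiv.swap_apply_left,
    Equiv.swap_apply_right] at h
  simp_rw [fun w : Equiv.Perm (Fin n) => sg_antisymm (w i) (w j)] at h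
  rw [Finset.sum_neg_distrib] at h
  linarith

lemma corr_self {n : ℕ} {i j : Fin n} (h : i ≠ j) : corr i j i j = n.factorial := by
  unfold corr
  rw [Finset.sum_congr rfl fun w _ => sg_mul_self (w.injective.ne h)]
  simp [Fintype.card_perm]

/-- Swapping `i` and `j` negates `corr i j k l` while fixing `k` and `l`. -/
lemma corr_disjoint {n : ℕ} {i j k l : Fin n} (hik : i ≠ k) (hil : i ≠ l) (hjk : j ≠ k)
    (hjl : j ≠ l) : corr i j k l = 0 := by
  have h := corr_comp (Equiv.swap i j) i j k l
  rw [Equiv.swap_apply_left, Equiv.swap_apply_right,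
    Equiv.swap_apply_of_ne_of_ne hik.symm hjk.symm,
    Equiv.swap_apply_of_ne_of_ne hil.symm hjl.symm, corr_neg_left] at h
  linarith

/-- The three terms of `sg_triple` have equal sums over all permutations, and they add up to `n!`. -/
lemma corr_share {n : ℕ} {i j l : Fin n} (hij : i ≠ j) (hil : i ≠ l) (hjl : j ≠ l) :
    corr i j i l = n.factorial / 3 := by
  have h1 := corr_comp (Equiv.swap i j) i j i l
  rw [Equiv.swap_apply_left, Equiv.swap_apply_right,
    Equiv.swap_apply_of_ne_of_ne hil.symm hjl.symm] at h1
  have h2 := corr_comp (Equiv.swap i l) i l i j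
  rw [Equiv.swap_apply_left, Equiv.swap_apply_right,
    Equiv.swap_apply_of_ne_of_ne hij.symm hjl] at h2
  have h3 : corr i l i j = corr i j i l := Finset.sum_congr rfl fun w _ => mul_comm _ _
  have h : corr i j i l + corr j i j l + corr l i l j = n.factorial := by
    unfold corr
    rw [← Finset.sum_add_distrib, ← Finset.sum_add_distrib,
      Finset.sum_congr rfl fun w _ => sg_triple (w.injective.ne hij) (w.injective.ne hil)
        (w.injective.ne hjl)]
    simp [Fintype.card_perm]
  linarith

/-- The Kronecker delta on `Fin n`. -/
def dl {n : ℕ} (i j : Fin n) : ℚ := if i = j then 1 else 0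

lemma corr_eq {n : ℕ} {i j k l : Fin n} (hij : i ≠ j) (hkl : k ≠ l) :
    corr i j k l = n.factorial / 3 *
      ((dl i k - dl i l - dl j k + dl j l) + (dl i k * dl j l - dl i l * dl j k)) := by
  unfold dl
  by_cases hik : i = k
  · subst hik
    by_cases hjl : j = l
    · subst hjl
      rw [corr_self hij]; simp [hij, hij.symm]; ring
    · rw [corr_share hij hkl hjl]; simp [hij.symm, hkl, hjl]
  by_cases hil : i = l
  · subst hil
    rw [corr_neg_right]
    by_cases hjk : j = k
    · subst hjk
      rw [corr_self hij]; simp [hij, hij.symm]; ring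
    · rw [corr_share hij (Ne.symm hkl) hjk]; simp [hij.symm, hik, hjk]
  by_cases hjk : j = k
  · subst hjk
    rw [corr_neg_left, corr_share hij.symm hkl hil]; simp [hil, hkl, hij]
  by_cases hjl : j = l
  · subst hjl
    rw [corr_neg_left, corr_neg_right, corr_share hij.symm hkl.symm hik]
    simp [hik, hjk, hij]
  rw [corr_disjoint hik hil hjk hjl]; simp [hik, hil, hjk, hjl]

lemma count_eq {n : ℕ} {i j k l : Fin n} (hij : i ≠ j) (hkl : k ≠ l) :
    (((Finset.univ : Finset (Equiv.Perm (Fin n))).filter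
      (fun w => w⁻¹ i < w⁻¹ j ∧ w⁻¹ k < w⁻¹ l)).card : ℚ) =
      (n.factorial + corr i j k l) / 4 := by
  have ind : ∀ {a b : Fin n}, a ≠ b → (if a < b then (1 : ℚ) else 0) = (1 + sg a b) / 2 := by
    intro a b h
    unfold sg
    rcases lt_or_gt_of_ne h with h | h
    · simp [h]
    · simp [h, h.not_gt]
  rw [Finset.card_filter]
  push_cast
  refine (Equiv.sum_comp (Equiv.inv (Equiv.Perm (Fin n)))
    (fun w : Equiv.Perm (Fin n) => if w i < w j ∧ w k < w l then (1 : ℚ) else 0)).trans ?_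
  have h : ∀ w : Equiv.Perm (Fin n), (if w i < w j ∧ w k < w l then (1 : ℚ) else 0) =
      (1 + sg (w i) (w j) + sg (w k) (w l) + sg (w i) (w j) * sg (w k) (w l)) / 4 := by
    intro w
    rw [ite_and, ← mul_boole, ind (w.injective.ne hij), ind (w.injective.ne hkl)]
    ring
  simp_rw [h]
  rw [← Finset.sum_div, Finset.sum_add_distrib, Finset.sum_add_distrib,
    Finset.sum_add_distrib, sum_sg, sum_sg]
  simp [Fintype.card_perm, corr]

/-! ### The matrices in the decomposition of `μ` -/

/-- The opposite root: `(i, j) ↦ (j, i)`. -/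
def sw {n : ℕ} (p : Root n) : Root n := ⟨(p.1.2, p.1.1), p.2.symm⟩
/-- The inclusion of the positive roots into all roots. -/
def inc {n : ℕ} (t : PosRoot n) : Root n := ⟨t.1, t.2.ne⟩

lemma sw_sw {n : ℕ} (p : Root n) : sw (sw p) = p := rfl

lemma eq_sw_iff {n : ℕ} (p q : Root n) : p = sw q ↔ q = sw p :=
  ⟨fun h => by rw [h, sw_sw], fun h => by rw [h, sw_sw]⟩

lemma sw_ne {n : ℕ} (p : Root n) : p ≠ sw p := fun h =>
  p.2 (congrArg (fun q : Root n => q.1.1) h)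

/-- The matrix `B` whose row at `(i, j)` is the vector `e_i - e_j`. -/
def coordMat (n : ℕ) : Matrix (Root n) (Fin n) ℚ :=
  Matrix.of fun p v => dl p.1.1 v - dl p.1.2 v

/-- The matrix `C` whose column at a positive root `t` is the indicator of `t` minus that of its
opposite; its columns form a basis of the functions on roots that are odd under `sw`. -/
def altMat (n : ℕ) : Matrix (Root n) (PosRoot n) ℚ :=
  Matrix.of fun p t => (if p = inc t then 1 else 0) - (if p = sw (inc t) then 1 else 0)

/-- The all-ones matrix `J`. -/
def ones (m : Type*) : Matrix m m ℚ := Matrix.of fun _ _ => 1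

lemma sum_root {n : ℕ} (g : Fin n → Fin n → ℚ) (hg : ∀ i, g i i = 0) :
    ∑ p : Root n, g p.1.1 p.1.2 = ∑ i, ∑ j, g i j := by
  rw [← Fintype.sum_prod_type' g,
    ← Finset.sum_subtype (Finset.univ.filter fun p : Fin n × Fin n => p.1 ≠ p.2) (by simp)
      (fun p => g p.1 p.2)]
  refine Finset.sum_subset (Finset.subset_univ _) fun p _ hp => ?_
  have h : p.1 = p.2 := by simpa using hp
  rw [h, hg]

lemma coord_mul_transpose {n : ℕ} (p q : Root n) :
    (coordMat n * (coordMat n)ᵀ) p q =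
      dl p.1.1 q.1.1 - dl p.1.1 q.1.2 - dl p.1.2 q.1.1 + dl p.1.2 q.1.2 := by
  simp [Matrix.mul_apply, coordMat, dl, mul_sub, Finset.sum_sub_distrib, eq_comm]
  ring

lemma coord_transpose_mul (n : ℕ) :
    (coordMat n)ᵀ * coordMat n = (2 * n : ℚ) • (1 : Matrix (Fin n) (Fin n) ℚ) -
      (2 : ℚ) • ones (Fin n) := by
  ext u v
  simp only [Matrix.mul_apply, coordMat, Matrix.transpose_apply, Matrix.of_apply]
  rw [sum_root (fun i j => (dl i u - dl j u) * (dl i v - dl j v)) (by simp)]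
  simp [dl, ones, mul_sub, Finset.sum_sub_distrib, Matrix.one_apply, eq_comm]
  split_ifs <;> ring

/-- `C Cᵀ = 1 - P`: in row `p` of `C` the only nonzero entry is `±1`, at whichever of `p` and
`sw p` is positive. -/
lemma alt_mul_transpose {n : ℕ} (p q : Root n) :
    (altMat n * (altMat n)ᵀ) p q = (if p = q then 1 else 0) - (if p = sw q then 1 else 0) := by
  simp only [Matrix.mul_apply, altMat, Matrix.transpose_apply, Matrix.of_apply]
  rcases lt_or_gt_of_ne p.2 with h | h
  · have hp : p = inc ⟨p.1, h⟩ := rfl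
    rw [Finset.sum_eq_single ⟨p.1, h⟩]
    · rw [← hp]
      simp [sw_ne, eq_sw_iff p q, eq_comm]
    · intro t _ ht
      have h1 : p ≠ inc t := fun e => ht (Subtype.ext (congrArg (fun r : Root n => r.1) e.symm))
      have h2 : p ≠ sw (inc t) := by
        rintro rfl
        exact lt_asymm h t.2
      simp [h1, h2]
    · simp
  · have hp : sw p = inc ⟨(sw p).1, h⟩ := rfl
    rw [Finset.sum_eq_single ⟨(sw p).1, h⟩]
    · rw [← hp]
      simp [sw_sw, sw_ne, eq_sw_iff p q, eq_comm]
    · intro t _ ht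
      have h1 : p ≠ sw (inc t) := fun e => ht (Subtype.ext (congrArg (fun r : Root n => (sw r).1) e.symm))
      have h2 : p ≠ inc t := by
        rintro rfl
        exact lt_asymm h t.2
      simp [h1, h2]
    · simp

lemma alt_transpose_mul (n : ℕ) :
    (altMat n)ᵀ * altMat n = (2 : ℚ) • (1 : Matrix (PosRoot n) (PosRoot n) ℚ) := by
  ext s t
  have h1 : sw (inc s) ≠ inc t := fun e => by
    have := s.2
    have := t.2
    have e1 : s.1.2 = t.1.1 := congrArg (fun q : Root n => q.1.1) e
    have e2 : s.1.1 = t.1.2 := congrArg (fun q : Root n => q.1.2) e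
    omega
  have h2 : inc s ≠ sw (inc t) := fun e => h1 (by rw [e, sw_sw])
  have h3 : inc s = inc t ↔ s = t :=
    ⟨fun e => Subtype.ext (congrArg (fun q : Root n => q.1) e), fun e => by rw [e]⟩
  have h4 : sw (inc s) = sw (inc t) ↔ s = t :=
    ⟨fun e => h3.1 (by rw [← sw_sw (inc s), e, sw_sw]), fun e => by rw [e]⟩
  simp only [Matrix.mul_apply, altMat, Matrix.transpose_apply, Matrix.of_apply, sub_mul,
    Finset.sum_sub_distrib, ite_mul, one_mul, zero_mul, Finset.sum_ite_eq',
    Finset.mem_univ, if_true, h1, h2, h3, h4, if_false, Matrix.smul_apply, Matrix.one_apply,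
    smul_eq_mul]
  split_ifs <;> norm_num

lemma ones_mul_coord (n : ℕ) : ones (Root n) * coordMat n = 0 := by
  ext p v
  simp only [Matrix.mul_apply, coordMat, ones, Matrix.of_apply, one_mul]
  rw [sum_root (fun i j => dl i v - dl j v) (by simp)]
  simp [dl, Finset.sum_sub_distrib]

lemma ones_mul_alt (n : ℕ) : ones (Root n) * altMat n = 0 := by
  ext p t
  simp [Matrix.mul_apply, altMat, ones, Finset.sum_sub_distrib]

lemma alt_mul_coord (n : ℕ) :
    altMat n * (altMat n)ᵀ * coordMat n = (2 : ℚ) • coordMat n := by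
  ext p v
  rw [Matrix.mul_apply]
  simp only [alt_mul_transpose, eq_sw_iff p]
  simp only [sub_mul, Finset.sum_sub_distrib, ite_mul, one_mul, zero_mul, Finset.sum_ite_eq,
    Finset.sum_ite_eq', Finset.mem_univ, if_true]
  simp only [coordMat, sw, Matrix.of_apply, Matrix.smul_apply, smul_eq_mul]
  ring

/-! ### Determinants -/

lemma card_root (n : ℕ) : Fintype.card (Root n) = n * (n - 1) := by
  rw [Fintype.card_subtype, Nat.mul_sub_one]
  have := Finset.offDiag_card (Finset.univ : Finset (Fin n))
  rw [Finset.card_univ, Fintype.card_fin] at this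
  rw [← this]
  congr 1
  ext; simp

/-- Obtained by comparing the traces of `C Cᵀ` and `Cᵀ C`. -/
lemma two_mul_card_posRoot (n : ℕ) : 2 * Fintype.card (PosRoot n) = Fintype.card (Root n) := by
  have h := Matrix.trace_mul_comm (altMat n) (altMat n)ᵀ
  rw [alt_transpose_mul] at h
  simp only [Matrix.trace, Matrix.diag_apply, alt_mul_transpose] at h
  simp only [sw_ne, if_true, if_false, sub_zero, Finset.sum_const, Finset.card_univ,
    nsmul_eq_mul, mul_one, Matrix.smul_apply, Matrix.one_apply_eq, smul_eq_mul] at h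
  rw [mul_comm (Fintype.card (PosRoot n) : ℚ)] at h
  exact_mod_cast h.symm

lemma det_smul_one_sub_ones {m : Type*} [Fintype m] [DecidableEq m] [Nonempty m] {x : ℚ}
    (hx : x ≠ 0) (a : ℚ) :
    (x • (1 : Matrix m m ℚ) - a • ones m).det =
      x ^ (Fintype.card m - 1) * (x - a * Fintype.card m) := by
  have h : x • (1 : Matrix m m ℚ) - a • ones m =
      x • (1 + replicateCol Unit (fun _ : m => -(a / x)) * replicateRow Unit (fun _ : m => (1 : ℚ))) := by
    ext i j
    simp [ones, Matrix.mul_apply]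
    field_simp
    ring
  rw [h, Matrix.det_smul, Matrix.det_one_add_replicateCol_mul_replicateRow]
  obtain ⟨k, hk⟩ := Nat.exists_eq_succ_of_ne_zero (Fintype.card_ne_zero (α := m))
  simp [dotProduct, hk]
  field_simp
  ring

lemma det_smul_one_sub_alt (n : ℕ) {x : ℚ} (hx : x ≠ 0) (b : ℚ) :
    (x • (1 : Matrix (Root n) (Root n) ℚ) - b • (altMat n * (altMat n)ᵀ)).det =
      x ^ Fintype.card (PosRoot n) * (x - 2 * b) ^ Fintype.card (PosRoot n) := by
  have h : x • (1 : Matrix (Root n) (Root n) ℚ) - b • (altMat n * (altMat n)ᵀ) =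
      x • (1 - ((b / x) • altMat n) * (altMat n)ᵀ) := by
    rw [smul_sub, Matrix.smul_mul, smul_smul, mul_div_cancel₀ _ hx]
  have h2 : (1 : Matrix (PosRoot n) (PosRoot n) ℚ) - (b / x) • (2 : ℚ) • 1 =
      (1 - b / x * 2) • 1 := by
    rw [smul_smul, sub_smul, one_smul]
  rw [h, Matrix.det_smul, Matrix.det_one_sub_mul_comm, Matrix.mul_smul, alt_transpose_mul, h2,
    Matrix.det_smul, Matrix.det_one, ← two_mul_card_posRoot, mul_one, two_mul, pow_add, mul_assoc,
    ← mul_pow]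
  congr 2
  field_simp

lemma det_one_sub_coord {n : ℕ} (hn : 2 ≤ n) {c : ℚ} (hc : 1 - 2 * n * c ≠ 0) :
    (1 - c • (coordMat n * (coordMat n)ᵀ)).det = (1 - 2 * n * c) ^ (n - 1) := by
  have : Nonempty (Fin n) := ⟨⟨0, by omega⟩⟩
  have h : (1 : Matrix (Fin n) (Fin n) ℚ) -
      c • ((2 * n : ℚ) • 1 - (2 : ℚ) • ones (Fin n)) =
      (1 - 2 * n * c) • 1 - (-2 * c) • ones (Fin n) := by
    module
  rw [← Matrix.smul_mul, Matrix.det_one_sub_mul_comm, Matrix.mul_smul, coord_transpose_mul, h,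
    det_smul_one_sub_ones hc, Fintype.card_fin]
  ring

/-- The characteristic polynomial of `a J + b (B Bᵀ + C Cᵀ)`, evaluated at `x` other than
`0`, `2b` and `2b + 2nb`. -/
lemma det_key {n : ℕ} (hn : 2 ≤ n) {x a b : ℚ} (hx : x ≠ 0) (hxb : x - 2 * b ≠ 0)
    (hxn : x - 2 * b - 2 * n * b ≠ 0) :
    (x • (1 : Matrix (Root n) (Root n) ℚ) - (a • ones (Root n) +
      b • (coordMat n * (coordMat n)ᵀ + altMat n * (altMat n)ᵀ))).det =
    x ^ (n * (n - 1) / 2 - 1) * (x - a * (n * (n - 1) : ℕ)) *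
      (x - 2 * b - 2 * n * b) ^ (n - 1) * (x - 2 * b) ^ ((n - 1) * (n - 2) / 2) := by
  have : Nonempty (Root n) := ⟨⟨(⟨0, by omega⟩, ⟨1, by omega⟩), by simp⟩⟩
  set J := ones (Root n)
  set B := coordMat n
  set C := altMat n
  have hJB : J * (B * Bᵀ) = 0 := by rw [← Matrix.mul_assoc, ones_mul_coord, Matrix.zero_mul]
  have hJC : J * (C * Cᵀ) = 0 := by rw [← Matrix.mul_assoc, ones_mul_alt, Matrix.zero_mul]
  have hCB : (C * Cᵀ) * (B * Bᵀ) = (2 : ℚ) • (B * Bᵀ) := by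
    rw [← Matrix.mul_assoc, alt_mul_coord, Matrix.smul_mul]
  have e1 : x • (x • (1 : Matrix (Root n) (Root n) ℚ) - (a • J + b • (B * Bᵀ + C * Cᵀ))) =
      (x • 1 - a • J) * ((x • 1 - b • (C * Cᵀ)) * (1 - (b / (x - 2 * b)) • (B * Bᵀ))) := by
    have e2 : (x • 1 - b • (C * Cᵀ)) * (1 - (b / (x - 2 * b)) • (B * Bᵀ)) =
        x • 1 - b • (B * Bᵀ + C * Cᵀ) := by
      have hc : x * (b / (x - 2 * b)) - b * (b / (x - 2 * b)) * 2 = b := by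
        rw [← mul_div_assoc, ← mul_div_assoc, div_mul_eq_mul_div, ← sub_div, div_eq_iff hxb]
        ring
      simp only [sub_mul, mul_sub, Matrix.smul_mul, Matrix.mul_smul, Matrix.one_mul,
        Matrix.mul_one, hCB]
      have hcB := congrArg (fun y : ℚ => y • (B * Bᵀ)) hc
      linear_combination (norm := module) (-1 : ℚ) • hcB
    rw [e2]
    simp only [sub_mul, mul_sub, Matrix.smul_mul, Matrix.mul_smul, Matrix.one_mul,
        Matrix.mul_one, Matrix.mul_add, hJB, hJC]
    module
  have hc : 1 - 2 * n * (b / (x - 2 * b)) = (x - 2 * b - 2 * n * b) / (x - 2 * b) := by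
    field_simp
  have hd := congrArg Matrix.det e1
  rw [Matrix.det_smul, Matrix.det_mul, Matrix.det_mul, det_smul_one_sub_ones hx,
    det_smul_one_sub_alt n hx, det_one_sub_coord hn (by rw [hc]; positivity), hc] at hd
  -- The rest compares exponents: with `N` positive roots, `N = (n - 1)(n - 2)/2 + (n - 1)`.
  have hN := two_mul_card_posRoot n
  rw [card_root] at hN hd
  set N := Fintype.card (PosRoot n)
  obtain ⟨m, rfl⟩ : ∃ m, n = m + 2 := ⟨n - 2, by omega⟩
  have hNe : N = (m + 1) * m / 2 + (m + 1) := by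
    have : 2 * N = (m + 1) * m + (m + 1) * 2 := by rw [hN]; simp; ring
    omega
  have h1 : (m + 2) * (m + 2 - 1) / 2 = N := by omega
  have h2 : (m + 2 - 1) * (m + 2 - 2) / 2 = (m + 1) * m / 2 := by simp
  have h3 : m + 2 - 1 = m + 1 := rfl
  rw [h1, h2]
  rw [← hN] at hd ⊢
  rw [h3] at hd ⊢
  set K := (m + 1) * m / 2
  rw [hNe] at hd ⊢
  have e3 : 2 * (K + (m + 1)) - 1 = 2 * K + 2 * m + 1 := by omega
  have e4 : K + (m + 1) - 1 = K + m := by omega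
  rw [e3] at hd
  rw [e4]
  apply mul_left_cancel₀ (pow_ne_zero (2 * (K + (m + 1))) hx)
  rw [hd]
  rw [div_pow, pow_add (x - 2 * b) K (m + 1)]
  field_simp
  ring

lemma matrix_eq (n : ℕ) :
    (Matrix.of (fun p q : {p : Fin n × Fin n // p.1 ≠ p.2} =>
        (((Finset.univ : Finset (Equiv.Perm (Fin n))).filter
            (fun w => w⁻¹ p.1.1 < w⁻¹ p.1.2 ∧ w⁻¹ q.1.1 < w⁻¹ q.1.2)).card : ℚ))) =
    ((n.factorial : ℚ) / 4) • ones (Root n) + ((n.factorial : ℚ) / 12) •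
      (coordMat n * (coordMat n)ᵀ + altMat n * (altMat n)ᵀ) := by
  ext p q
  have h1 : (if p = q then (1 : ℚ) else 0) = dl p.1.1 q.1.1 * dl p.1.2 q.1.2 := by
    simp only [dl, Subtype.ext_iff, Prod.ext_iff]
    split_ifs <;> simp_all
  have h2 : (if p = sw q then (1 : ℚ) else 0) = dl p.1.1 q.1.2 * dl p.1.2 q.1.1 := by
    simp only [dl, Subtype.ext_iff, Prod.ext_iff, sw]
    split_ifs <;> simp_all
  rw [Matrix.of_apply, count_eq p.2 q.2, corr_eq p.2 q.2, Matrix.add_apply, Matrix.smul_apply,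
    Matrix.smul_apply, Matrix.add_apply, coord_mul_transpose, alt_mul_transpose, h1, h2]
  simp only [ones, Matrix.of_apply, smul_eq_mul]
  ring

end RootMu

/-- For `n ≥ 2`, with `Φ = {(i,j) : i ≠ j}` indexing the roots of the type `A_{n−1}`
root system, the matrix `μ((i,j),(k,l)) = #{w ∈ S_n : w⁻¹(i) < w⁻¹(j) and w⁻¹(k) < w⁻¹(l)}`
has characteristic polynomial
`X^{n(n−1)/2 − 1} · (X − C(n,2)·n!/2) · (X − (n+1)!/6)^{n−1} · (X − n!/6)^{(n−1)(n−2)/2}`. -/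
theorem charpoly_mu (n : ℕ) (hn : 2 ≤ n) :
    Matrix.charpoly
      (Matrix.of (fun p q : {p : Fin n × Fin n // p.1 ≠ p.2} =>
        (((Finset.univ : Finset (Equiv.Perm (Fin n))).filter
            (fun w => w⁻¹ p.1.1 < w⁻¹ p.1.2 ∧ w⁻¹ q.1.1 < w⁻¹ q.1.2)).card : ℚ))) =
    Polynomial.X ^ (n * (n - 1) / 2 - 1) *
      (Polynomial.X - Polynomial.C ((n.choose 2 : ℚ) * (n.factorial : ℚ) / 2)) *
      (Polynomial.X - Polynomial.C (((n + 1).factorial : ℚ) / 6)) ^ (n - 1) *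
      (Polynomial.X - Polynomial.C ((n.factorial : ℚ) / 6)) ^ ((n - 1) * (n - 2) / 2) := by
  rw [RootMu.matrix_eq]
  apply Polynomial.eq_of_infinite_eval_eq
  set b : ℚ := (n.factorial : ℚ) / 12 with hb
  refine ((Set.toFinite {0, 2 * b, 2 * b + 2 * n * b}).infinite_compl).mono fun x hx => ?_
  simp only [Set.mem_compl_iff, Set.mem_insert_iff, Set.mem_singleton_iff, not_or] at hx
  obtain ⟨h0, h1, h2⟩ := hx
  have key := RootMu.det_key hn (a := (n.factorial : ℚ) / 4) h0 (sub_ne_zero.2 h1)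
    (by rw [sub_sub]; exact sub_ne_zero.2 h2)
  have e1 : (n.choose 2 : ℚ) * (n.factorial : ℚ) / 2 =
      (n.factorial : ℚ) / 4 * (n * (n - 1) : ℕ) := by
    rw [Nat.cast_choose_two, Nat.cast_mul, Nat.cast_pred (by omega)]
    ring
  have e2 : ((n + 1).factorial : ℚ) / 6 = 2 * b + 2 * n * b := by
    rw [Nat.factorial_succ, hb]; push_cast; ring
  have e3 : (n.factorial : ℚ) / 6 = 2 * b := by rw [hb]; ring
  rw [Set.mem_ofPred_eq, Matrix.eval_charpoly, e1, e2, e3, Matrix.scalar_apply,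
    ← Matrix.smul_one_eq_diagonal, key]
  simp [sub_sub]
end
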